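/- The frame in ℝ^n consisting of the n(n+1)/2 vectors {e_1, ..., e_n} ∪ {e_i + e_j : 1 ≤ i < j ≤ n} (where e_1, ..., e_n is the standard basis) is vital: it permits phase retrieval, and for every vector w in the family, the family with w removed does not permit phase retrieval. -/

import Mathlib

open Matrix

/-- A family of vectors in `ℝ^n` (given as a set) permits phase retrieval. -/
def RealPhaseRetrieval {n : ℕ} (F : Set (Fin n → ℝ)) : Prop :=
  ∀ x y : Fin n → ℝ, (∀ v ∈ F, (v ⬝ᵥ x) ^ 2 = (v ⬝ᵥ y) ^ 2) → x = y ∨ x = -y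

/-!
With `u = x - y` and `v = x + y`, the identity `⟨f, x⟩² - ⟨f, y⟩² = ⟨f, u⟩⟨f, v⟩` turns phase
retrieval into a bilinear condition: no two nonzero vectors `u`, `v` satisfy `⟨f, u⟩⟨f, v⟩ = 0` for
every `f` in the frame. For the frame of the `e i` and the `e i + e j` this product condition reads
`u i * v i = 0` and `u i * v j + u j * v i = 0`, so a nonzero coordinate of `u` kills all of `v`.
Conversely, the pair `e k`, `1 - 2 e k` violates only the condition at `e k`, and the pair
`e k`, `e l` only the one at `e k + e l`.
-/

section PhaseRetrieval

variable {ι R : Type*} [Fintype ι] [CommRing R]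

/-- Phase retrieval over a commutative ring, for the bilinear form `⬝ᵥ`; the case `R = ℝ`,
`ι = Fin n` is `RealPhaseRetrieval`. -/
def PermitsPhaseRetrieval (F : Set (ι → R)) : Prop :=
  ∀ x y : ι → R, (∀ f ∈ F, (f ⬝ᵥ x) ^ 2 = (f ⬝ᵥ y) ^ 2) → x = y ∨ x = -y

/-- A vital frame: one that permits phase retrieval and is minimal with this property. Frames are
encoded as sets, so removing a vector is deleting it from the set. -/
def IsVital (F : Set (ι → R)) : Prop :=
  PermitsPhaseRetrieval F ∧ ∀ w ∈ F, ¬ PermitsPhaseRetrieval (F \ {w})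

theorem permitsPhaseRetrieval_of_forall_mul_eq_zero {F : Set (ι → R)}
    (hF : ∀ u v : ι → R, (∀ f ∈ F, (f ⬝ᵥ u) * (f ⬝ᵥ v) = 0) → u = 0 ∨ v = 0) :
    PermitsPhaseRetrieval F := by
  intro x y hxy
  have hmul : ∀ f ∈ F, (f ⬝ᵥ (x - y)) * (f ⬝ᵥ (x + y)) = 0 := by
    intro f hf
    rw [dotProduct_sub, dotProduct_add]
    linear_combination hxy f hf
  exact (hF _ _ hmul).imp sub_eq_zero.mp eq_neg_of_add_eq_zero_left

theorem not_permitsPhaseRetrieval_of_mul_eq_zero [NoZeroDivisors R] [NeZero (2 : R)]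
    {F : Set (ι → R)} {u v : ι → R} (hu : u ≠ 0) (hv : v ≠ 0)
    (huv : ∀ f ∈ F, (f ⬝ᵥ u) * (f ⬝ᵥ v) = 0) : ¬ PermitsPhaseRetrieval F := by
  intro hF
  have eq_zero_of_add_self {w : ι → R} (hw : w + w = 0) : w = 0 :=
    (smul_eq_zero.mp ((two_smul R w).trans hw)).resolve_left two_ne_zero
  have hsq : ∀ f ∈ F, (f ⬝ᵥ (u + v)) ^ 2 = (f ⬝ᵥ (u - v)) ^ 2 := by
    intro f hf
    rw [dotProduct_add, dotProduct_sub]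
    linear_combination 4 * huv f hf
  rcases hF _ _ hsq with h | h
  · exact hv (eq_zero_of_add_self (by linear_combination h))
  · exact hu (eq_zero_of_add_self (by linear_combination h))

end PhaseRetrieval

theorem eq_zero_or_eq_zero_of_mul_add_mul_eq_zero {ι R : Type*} [NonUnitalNonAssocSemiring R]
    [NoZeroDivisors R] {u v : ι → R} (hdiag : ∀ i, u i * v i = 0)
    (hoff : Pairwise fun i j ↦ u i * v j + u j * v i = 0) : u = 0 ∨ v = 0 := by
  refine or_iff_not_imp_left.mpr fun hu ↦ ?_
  obtain ⟨k, huk⟩ := Function.ne_iff.mp hu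
  have hvk : v k = 0 := (mul_eq_zero.mp (hdiag k)).resolve_left huk
  funext j
  obtain rfl | hkj := eq_or_ne k j
  · exact hvk
  · have hprod : u k * v j = 0 := by simpa only [hvk, mul_zero, add_zero] using hoff hkj
    exact (mul_eq_zero.mp hprod).resolve_left huk

section PairSumFrame

variable {ι R : Type*}

/-- The frame of all `e i` and all `e i + e j` with `i ≠ j`. Indexing by `i ≠ j` lists each sum
twice, which does not change the set and avoids an order on `ι`. -/
def pairSumFrame (ι R : Type*) [DecidableEq ι] [Semiring R] : Set (ι → R) :=
  Set.range (fun k : ι ↦ (Pi.single k 1 : ι → R)) ∪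
    {w | ∃ i j : ι, i ≠ j ∧ w = (Pi.single i 1 : ι → R) + Pi.single j 1}

theorem pairSumFrame_eq_of_linearOrder [LinearOrder ι] [Semiring R] :
    pairSumFrame ι R = Set.range (fun k : ι ↦ (Pi.single k 1 : ι → R)) ∪
      {w | ∃ i j : ι, i < j ∧ w = (Pi.single i 1 : ι → R) + Pi.single j 1} := by
  refine congrArg (Set.range _ ∪ ·) <| Set.Subset.antisymm ?_
    fun w ⟨i, j, hij, hw⟩ ↦ ⟨i, j, hij.ne, hw⟩
  rintro _ ⟨i, j, hij, rfl⟩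
  obtain hlt | hgt := hij.lt_or_gt
  · exact ⟨i, j, hlt, rfl⟩
  · exact ⟨j, i, hgt, add_comm _ _⟩

variable [Fintype ι] [DecidableEq ι] [CommRing R] [NoZeroDivisors R]

theorem permitsPhaseRetrieval_pairSumFrame : PermitsPhaseRetrieval (pairSumFrame ι R) := by
  refine permitsPhaseRetrieval_of_forall_mul_eq_zero fun u v huv ↦ ?_
  have hdiag (i : ι) : u i * v i = 0 := by
    simpa only [single_one_dotProduct] using huv _ (.inl ⟨i, rfl⟩)
  refine eq_zero_or_eq_zero_of_mul_add_mul_eq_zero hdiag fun i j hij ↦ ?_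
  have hsum : (u i + u j) * (v i + v j) = 0 := by
    simpa only [add_dotProduct, single_one_dotProduct] using huv _ (.inr ⟨i, j, hij, rfl⟩)
  linear_combination hsum - hdiag i - hdiag j

variable [NeZero (2 : R)]

theorem not_permitsPhaseRetrieval_pairSumFrame_diff_single (k : ι) :
    ¬ PermitsPhaseRetrieval (pairSumFrame ι R \ {Pi.single k 1}) := by
  have : Nontrivial R := NeZero.nontrivial (2 : R)
  have hv : (1 - Pi.single k 2 : ι → R) ≠ 0 := fun h ↦ by
    have hk : (1 : R) - 2 = 0 := by simpa using congrFun h k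
    norm_num at hk
  refine not_permitsPhaseRetrieval_of_mul_eq_zero (u := Pi.single k 1)
    (Pi.single_ne_zero_iff.mpr one_ne_zero) hv ?_
  rintro _ ⟨⟨i, rfl⟩ | ⟨i, j, hij, rfl⟩, hne⟩
  · have hik : i ≠ k := fun h ↦ hne (h ▸ rfl)
    simp [hik]
  · simp only [add_dotProduct, single_one_dotProduct, Pi.sub_apply, Pi.one_apply]
    obtain rfl | hik := eq_or_ne i k
    · norm_num [hij.symm]
    · obtain rfl | hjk := eq_or_ne j k
      · norm_num [hij]
      · simp [hik, hjk]

theorem not_permitsPhaseRetrieval_pairSumFrame_diff_add {k l : ι} (hkl : k ≠ l) :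
    ¬ PermitsPhaseRetrieval (pairSumFrame ι R \ {Pi.single k 1 + Pi.single l 1}) := by
  have : Nontrivial R := NeZero.nontrivial (2 : R)
  refine not_permitsPhaseRetrieval_of_mul_eq_zero (u := Pi.single k 1) (v := Pi.single l 1)
    (Pi.single_ne_zero_iff.mpr one_ne_zero) (Pi.single_ne_zero_iff.mpr one_ne_zero) ?_
  rintro _ ⟨⟨i, rfl⟩ | ⟨i, j, -, rfl⟩, hne⟩
  · obtain rfl | hik := eq_or_ne i k
    · simp [hkl]
    · simp [hik]
  · obtain rfl | hik := eq_or_ne i k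
    · have hjl : j ≠ l := fun h ↦ hne (h ▸ rfl)
      simp [hkl, hjl]
    · obtain rfl | hjk := eq_or_ne j k
      · have hil : i ≠ l := fun h ↦ hne (h ▸ add_comm _ _)
        simp [hkl, hil]
      · simp [hik, hjk]

theorem stmt6_general : IsVital (pairSumFrame ι R) := by
  refine ⟨permitsPhaseRetrieval_pairSumFrame, ?_⟩
  rintro _ (⟨k, rfl⟩ | ⟨k, l, hkl, rfl⟩)
  · exact not_permitsPhaseRetrieval_pairSumFrame_diff_single k
  · exact not_permitsPhaseRetrieval_pairSumFrame_diff_add hkl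

end PairSumFrame

theorem stmt6 (n : ℕ)
    (F : Set (Fin n → ℝ))
    (hF : F = Set.range (fun k : Fin n => (Pi.single k 1 : Fin n → ℝ)) ∪
      {w : Fin n → ℝ | ∃ i j : Fin n, i < j ∧
        w = (Pi.single i 1 : Fin n → ℝ) + Pi.single j 1}) :
    RealPhaseRetrieval F ∧ ∀ w ∈ F, ¬ RealPhaseRetrieval (F \ {w}) := by
  rw [hF, ← pairSumFrame_eq_of_linearOrder]
  exact stmt6_general
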